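/- For every matrix A ∈ Mat(2,ℂ) one has (1/2)·Σ_μ K̃^μ · A · K_μ = (1/2)·Σ_μ K^μ · A · K̃_μ = (tr A)·I, where the sums run over μ ∈ {0,1,2,3}. -/

import Mathlib

open Matrix BigOperators

noncomputable section

/-- The Pauli basis of `Mat(2,ℂ)`: `σ^0 = I`, `σ^1, σ^2, σ^3` the Pauli matrices. -/
def σm : Fin 4 → Matrix (Fin 2) (Fin 2) ℂ :=
  ![1, !![0, 1; 1, 0], !![0, -Complex.I; Complex.I, 0], !![1, 0; 0, -1]]

/-- The Minkowski matrix `η = diag(1,-1,-1,-1)`. -/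
def ηm : Fin 4 → Fin 4 → ℝ := fun a b => if a = b then (if a = 0 then 1 else -1) else 0

/-- Lowered-index Pauli matrices `σ_a := Σ_b η_{ab} σ^b`. -/
def σd (a : Fin 4) : Matrix (Fin 2) (Fin 2) ℂ := ∑ b, ηm a b • σm b

/-- The conjugate matrix `M̃ := (tr M)·I − M`. -/
def mtilde (M : Matrix (Fin 2) (Fin 2) ℂ) : Matrix (Fin 2) (Fin 2) ℂ :=
  M.trace • (1 : Matrix (Fin 2) (Fin 2) ℂ) - M

/-- The contravariant metric `g^{μν} := Σ_{a,b} y^μ_a y^ν_b η^{ab}` built from a tetrad `y`. -/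
def gUp (y : Matrix (Fin 4) (Fin 4) ℝ) : Matrix (Fin 4) (Fin 4) ℝ :=
  Matrix.of fun μ ν => ∑ a, ∑ b, y μ a * y ν b * ηm a b

/-- The covariant metric `g_{μν}`, the inverse matrix of `(g^{μν})`. -/
def gDown (y : Matrix (Fin 4) (Fin 4) ℝ) : Matrix (Fin 4) (Fin 4) ℝ := (gUp y)⁻¹

/-- `K^μ := Σ_a y^μ_a σ^a ∈ Mat(2,ℂ)`. -/
def K (y : Matrix (Fin 4) (Fin 4) ℝ) (μ : Fin 4) : Matrix (Fin 2) (Fin 2) ℂ :=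
  ∑ a, y μ a • σm a

/-- `K_μ := Σ_ν g_{μν} K^ν`. -/
def Kd (y : Matrix (Fin 4) (Fin 4) ℝ) (μ : Fin 4) : Matrix (Fin 2) (Fin 2) ℂ :=
  ∑ ν, gDown y μ ν • K y ν

theorem aux_metric (y : Matrix (Fin 4) (Fin 4) ℝ) (hy : IsUnit y.det) :
    yᵀ * gDown y * y = Matrix.of ηm := by
  have h1 : gUp y = y * Matrix.of ηm * yᵀ := by
    ext μ ν
    simp only [gUp, Matrix.of_apply, Matrix.mul_apply, Matrix.transpose_apply, Finset.sum_mul]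
    rw [Finset.sum_comm]
    refine Finset.sum_congr rfl fun a _ => Finset.sum_congr rfl fun b _ => ?_
    ring
  have h2 : (Matrix.of ηm) * (Matrix.of ηm) = 1 := by
    ext a b
    fin_cases a <;> fin_cases b <;> simp [Matrix.mul_apply, Fin.sum_univ_four, ηm]
  have hyt : IsUnit yᵀ.det := by rwa [Matrix.det_transpose]
  rw [gDown, h1, Matrix.mul_inv_rev, Matrix.mul_inv_rev, Matrix.inv_eq_left_inv h2,
    Matrix.mul_nonsing_inv_cancel_left _ _ hyt, Matrix.mul_assoc, Matrix.nonsing_inv_mul _ hy,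
    Matrix.mul_one]

theorem aux_bilin (y : Matrix (Fin 4) (Fin 4) ℝ) (hy : IsUnit y.det)
    (B : Matrix (Fin 2) (Fin 2) ℂ →ₗ[ℝ] Matrix (Fin 2) (Fin 2) ℂ →ₗ[ℝ]
      Matrix (Fin 2) (Fin 2) ℂ) :
    ∑ μ, B (K y μ) (Kd y μ) = ∑ a, ∑ b, ηm a b • B (σm a) (σm b) := by
  have h : ∀ a b, ηm a b = ∑ ν, ∑ μ, y μ a * gDown y μ ν * y ν b := by
    intro a b
    have := congrFun (congrFun (aux_metric y hy) a) b
    simp only [Matrix.of_apply, Matrix.mul_apply, Matrix.transpose_apply, Finset.sum_mul] at this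
    exact this.symm
  simp only [h, K, Kd, map_sum, map_smul, LinearMap.sum_apply, LinearMap.smul_apply,
    Finset.sum_smul, Finset.smul_sum, smul_smul]
  simp only [Fin.sum_univ_four]
  module

theorem mtilde_add (X Y) : mtilde (X + Y) = mtilde X + mtilde Y := by
  simp only [mtilde, Matrix.trace_add, add_smul]; abel

theorem mtilde_smul (c : ℝ) (X) : mtilde (c • X) = c • mtilde X := by
  simp only [mtilde, Matrix.trace_smul, smul_sub, smul_assoc]

/-- `(1/2)·Σ_μ K̃^μ A K_μ = (1/2)·Σ_μ K^μ A K̃_μ = (tr A)·I` for every `A ∈ Mat(2,ℂ)`. -/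
theorem K_sandwich_trace (y : Matrix (Fin 4) (Fin 4) ℝ) (hy : IsUnit y.det)
    (A : Matrix (Fin 2) (Fin 2) ℂ) :
    (1 / 2 : ℂ) • ∑ μ, mtilde (K y μ) * A * Kd y μ
      = A.trace • (1 : Matrix (Fin 2) (Fin 2) ℂ) ∧
    (1 / 2 : ℂ) • ∑ μ, K y μ * A * mtilde (Kd y μ)
      = A.trace • (1 : Matrix (Fin 2) (Fin 2) ℂ) := by
  constructor
  · have := aux_bilin y hy (LinearMap.mk₂ ℝ (fun X Y => mtilde X * A * Y)
      (by intros; simp only [mtilde_add, add_mul]) (by intros; simp only [mtilde_smul, smul_mul_assoc])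
      (by intros; simp only [mul_add]) (by intros; simp only [mul_smul_comm]))
    simp only [LinearMap.mk₂_apply] at this
    rw [this]
    ext i j
    fin_cases i <;> fin_cases j <;>
      simp [Fin.sum_univ_four, ηm, σm, mtilde, Matrix.mul_apply, Matrix.trace, Fin.sum_univ_two,
        Matrix.vecMul, dotProduct] <;>
      ring_nf <;> (try simp only [Complex.I_sq]) <;> (try ring_nf)
  · have := aux_bilin y hy (LinearMap.mk₂ ℝ (fun X Y => X * A * mtilde Y)
      (by intros; simp only [add_mul]) (by intros; simp only [smul_mul_assoc])
      (by intros; simp only [mtilde_add, mul_add])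
      (by intros; simp only [mtilde_smul, mul_smul_comm]))
    simp only [LinearMap.mk₂_apply] at this
    rw [this]
    ext i j
    fin_cases i <;> fin_cases j <;>
      simp [Fin.sum_univ_four, ηm, σm, mtilde, Matrix.mul_apply, Matrix.trace, Fin.sum_univ_two,
        Matrix.vecMul, dotProduct] <;>
      ring_nf <;> (try simp only [Complex.I_sq]) <;> (try ring_nf)
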